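/- Let V be a finite-dimensional vector space over a field k, let R ⊆ V ⊗ V be a subspace, and let R^⊥ ⊆ V* ⊗ V* be its annihilator under the evaluation pairing. Let {v_i} be a basis of V with dual basis {f_i}, and let ι₂ = ∑_{i,j} (f_i ⊗ f_j) ⊗ (v_i ⊗ v_j) ∈ (V* ⊗ V*) ⊗ (V ⊗ V) be the element corresponding to the identity of V ⊗ V. Then ι₂ lies in the subspace R^⊥ ⊗ (V ⊗ V) + (V* ⊗ V*) ⊗ R. -/

import Mathlib

open TensorProduct Module

/-!
Under `W* ⊗ W ≃ End W` the canonical element `∑ fₐ ⊗ wₐ` is the identity. If `R ⊆ W` has a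
complement, the identity is `p + q` with `p` a projection onto `R` and `q` a projection killing `R`.
Applying `p` to the right factor of the canonical element lands in `W* ⊗ R`; applying `q` to the
right factor is the same as applying its transpose to the left factor, which lands in `R^⊥ ⊗ W`.
-/

section CanonicalElement

variable {k W W' κ κ' : Type*}

section CommSemiring

variable [CommSemiring k] [AddCommMonoid W] [Module k W] [AddCommMonoid W'] [Module k W']

theorem dualTensorHom_sum_coord_tmul [Fintype κ] (c : Basis κ k W) (f : W →ₗ[k] W') :
    dualTensorHom k W W' (∑ a, c.coord a ⊗ₜ[k] f (c a)) = f := by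
  ext w
  simp only [map_sum, LinearMap.sum_apply, dualTensorHom_apply, Basis.coord_apply, ← map_smul]
  rw [← map_sum, c.sum_repr]

theorem dualTensorHom_sum_coord_comp_tmul [Fintype κ'] (c : Basis κ' k W') (f : W →ₗ[k] W') :
    dualTensorHom k W W' (∑ a, (c.coord a ∘ₗ f) ⊗ₜ[k] c a) = f := by
  ext w
  simp only [map_sum, LinearMap.sum_apply, dualTensorHom_apply, LinearMap.comp_apply,
    Basis.coord_apply, c.sum_repr]

theorem sum_coord_tmul_map_eq_sum_coord_comp_tmul [Fintype κ] [Fintype κ']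
    (c : Basis κ k W) (c' : Basis κ' k W') (f : W →ₗ[k] W') :
    ∑ a, c.coord a ⊗ₜ[k] f (c a) = ∑ a, (c'.coord a ∘ₗ f) ⊗ₜ[k] c' a := by
  have : Module.Finite k W := .of_basis c
  have : Module.Free k W := .of_basis c
  apply dualTensorHom_bijective.injective
  rw [dualTensorHom_sum_coord_tmul, dualTensorHom_sum_coord_comp_tmul]

theorem dualDistrib_coord_tmul_coord (b : Basis κ k W) (c : Basis κ' k W') (i : κ) (j : κ') :
    dualDistrib k W W' (b.coord i ⊗ₜ[k] c.coord j) = (b.tensorProduct c).coord (i, j) := by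
  ext w w'
  simp [Basis.tensorProduct_repr_tmul_apply, mul_comm]

end CommSemiring

variable [CommRing k] [AddCommGroup W] [Module k W] [AddCommGroup W'] [Module k W']

theorem comp_projection_mem_dualAnnihilator (φ : Dual k W) {R S : Submodule k W}
    (hRS : IsCompl R S) : φ ∘ₗ S.projection R hRS.symm ∈ R.dualAnnihilator := by
  rw [Submodule.mem_dualAnnihilator]
  intro w hw
  rw [LinearMap.comp_apply, Submodule.projection_apply_of_mem_right hRS.symm hw, map_zero]

theorem sum_symm_coord_tmul_mem_sup {E : Type*} [AddCommMonoid E] [Module k E] [Fintype κ]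
    (c : Basis κ k W) (e : E ≃ₗ[k] Dual k W) {R S : Submodule k W} (hRS : IsCompl R S) :
    ∑ a, e.symm (c.coord a) ⊗ₜ[k] c a ∈
      LinearMap.range (TensorProduct.map
          (R.dualAnnihilator.comap e.toLinearMap).subtype (LinearMap.id : W →ₗ[k] W)) ⊔
        LinearMap.range (TensorProduct.map (LinearMap.id : E →ₗ[k] E) R.subtype) := by
  set p := R.projection S hRS
  set q := S.projection R hRS.symm
  have transpose_q : ∑ a, e.symm (c.coord a) ⊗ₜ[k] q (c a) =
      ∑ a, e.symm (c.coord a ∘ₗ q) ⊗ₜ[k] c a := by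
    simpa only [map_sum, LinearMap.rTensor_tmul, LinearEquiv.coe_coe] using
      congrArg (e.symm.toLinearMap.rTensor W) (sum_coord_tmul_map_eq_sum_coord_comp_tmul c c q)
  have decomposition : ∑ a, e.symm (c.coord a) ⊗ₜ[k] c a =
      ∑ a, e.symm (c.coord a ∘ₗ q) ⊗ₜ[k] c a + ∑ a, e.symm (c.coord a) ⊗ₜ[k] p (c a) := by
    simp only [← transpose_q, ← Finset.sum_add_distrib, ← tmul_add, p, q,
      Submodule.projection_add_projection_eq_self]
  rw [decomposition]
  refine Submodule.add_mem_sup (sum_mem fun a _ => ?_) (sum_mem fun a _ => ?_)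
  · have annihilates : e.symm (c.coord a ∘ₗ q) ∈ R.dualAnnihilator.comap e.toLinearMap := by
      simpa using comp_projection_mem_dualAnnihilator (c.coord a) hRS
    exact ⟨⟨_, annihilates⟩ ⊗ₜ c a, rfl⟩
  · exact ⟨e.symm (c.coord a) ⊗ₜ R.projectionOnto S hRS (c a), rfl⟩

theorem stmt5_general [Fintype κ] [Fintype κ'] (b : Basis κ k W) (c : Basis κ' k W')
    {R S : Submodule k (W ⊗[k] W')} (hRS : IsCompl R S) :
    (∑ i, ∑ j, (b.coord i ⊗ₜ[k] c.coord j) ⊗ₜ[k] (b i ⊗ₜ[k] c j)) ∈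
      LinearMap.range (TensorProduct.map
          (Submodule.comap (dualDistrib k W W') R.dualAnnihilator).subtype
          (LinearMap.id : W ⊗[k] W' →ₗ[k] W ⊗[k] W')) ⊔
        LinearMap.range (TensorProduct.map
          (LinearMap.id : Dual k W ⊗[k] Dual k W' →ₗ[k] Dual k W ⊗[k] Dual k W')
          R.subtype) := by
  classical
  let e := dualDistribEquivOfBasis b c
  have symm_coord (i : κ) (j : κ') :
      e.symm ((b.tensorProduct c).coord (i, j)) = b.coord i ⊗ₜ[k] c.coord j :=
    e.symm_apply_eq.mpr (dualDistrib_coord_tmul_coord b c i j).symm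
  have canonical_mem := sum_symm_coord_tmul_mem_sup (b.tensorProduct c) e hRS
  simp only [Fintype.sum_prod_type, symm_coord, Basis.tensorProduct_apply] at canonical_mem
  exact canonical_mem

end CanonicalElement

/-- For a basis `{v_i}` of `V` with dual basis `{f_i}`, the element
`ι₂ = ∑_{i,j} (f_i ⊗ f_j) ⊗ (v_i ⊗ v_j)` lies in `R^⊥ ⊗ (V ⊗ V) + (V* ⊗ V*) ⊗ R`. -/
theorem stmt5 {k V ι : Type*} [Field k] [AddCommGroup V] [Module k V] [FiniteDimensional k V]
    [Fintype ι] (b : Basis ι k V) (R : Submodule k (V ⊗[k] V)) :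
    (∑ i : ι, ∑ j : ι, (b.coord i ⊗ₜ[k] b.coord j) ⊗ₜ[k] (b i ⊗ₜ[k] b j)) ∈
      LinearMap.range (TensorProduct.map
          (Submodule.comap (TensorProduct.dualDistrib k V V) R.dualAnnihilator).subtype
          (LinearMap.id : V ⊗[k] V →ₗ[k] V ⊗[k] V)) ⊔
        LinearMap.range (TensorProduct.map
          (LinearMap.id : Dual k V ⊗[k] Dual k V →ₗ[k] Dual k V ⊗[k] Dual k V)
          R.subtype) := by
  obtain ⟨S, hRS⟩ := R.exists_isCompl
  exact stmt5_general b b hRS
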